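/- For every metric space (Y,d) and every 0 < α < 1, the α-snowflake (Y, d^α) satisfies the SRA(α) condition; that is, for all x,y,z ∈ Y: d(x,y)^α ≤ max{d(x,z)^α + α·d(z,y)^α, α·d(x,z)^α + d(z,y)^α}. -/

import Mathlib

/-!
Let `a ≥ b ≥ 0` be the lengths of the two legs of the triangle. By concavity `t ↦ t ^ α` lies below
its tangent at `a`, so `(a + b) ^ α ≤ a ^ α + α * a ^ (α - 1) * b`; and `t ↦ t ^ (α - 1)` is
decreasing, so `a ^ (α - 1) * b ≤ b ^ (α - 1) * b = b ^ α`. The factor `α` of the `SRA(α)`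
condition is thus the one produced by differentiating `t ^ α`, and it goes to the shorter leg.
-/

section RealPowers

variable {a b α : ℝ}

theorem add_rpow_le_rpow_add_mul_rpow_sub_one_mul (ha : 0 < a) (hab : -a ≤ b)
    (hα0 : 0 ≤ α) (hα1 : α ≤ 1) : (a + b) ^ α ≤ a ^ α + α * (a ^ (α - 1) * b) := by
  have neg_one_le_div : -1 ≤ b / a := by rwa [le_div_iff₀ ha, neg_one_mul]
  calc (a + b) ^ α = (a * (1 + b / a)) ^ α := by rw [mul_add, mul_one, mul_div_cancel₀ b ha.ne']
    _ = a ^ α * (1 + b / a) ^ α := Real.mul_rpow ha.le (by linarith)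
    _ ≤ a ^ α * (1 + α * (b / a)) := by
      gcongr
      exact rpow_one_add_le_one_add_mul_self neg_one_le_div hα0 hα1
    _ = a ^ α + α * (a ^ (α - 1) * b) := by rw [Real.rpow_sub_one ha.ne']; ring

theorem rpow_sub_one_mul_le_rpow (hb : 0 ≤ b) (hba : b ≤ a) (hα1 : α ≤ 1) :
    a ^ (α - 1) * b ≤ b ^ α := by
  rcases hb.eq_or_lt with rfl | b_pos
  · simpa only [mul_zero] using Real.rpow_nonneg le_rfl α
  · calc a ^ (α - 1) * b ≤ b ^ (α - 1) * b :=
          mul_le_mul_of_nonneg_right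
            (Real.rpow_le_rpow_of_nonpos b_pos hba (sub_nonpos.2 hα1)) hb
      _ = b ^ α := by rw [Real.rpow_sub_one b_pos.ne', div_mul_cancel₀ _ b_pos.ne']

theorem add_rpow_le_rpow_add_mul_rpow (hb : 0 ≤ b) (hba : b ≤ a) (hα0 : 0 ≤ α) (hα1 : α ≤ 1) :
    (a + b) ^ α ≤ a ^ α + α * b ^ α := by
  rcases hb.eq_or_lt with rfl | b_pos
  · rw [add_zero]
    exact le_add_of_nonneg_right (mul_nonneg hα0 (Real.rpow_nonneg le_rfl α))
  · calc (a + b) ^ α ≤ a ^ α + α * (a ^ (α - 1) * b) :=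
          add_rpow_le_rpow_add_mul_rpow_sub_one_mul (b_pos.trans_le hba) (by linarith) hα0 hα1
      _ ≤ a ^ α + α * b ^ α := by
          gcongr
          exact rpow_sub_one_mul_le_rpow hb hba hα1

theorem add_rpow_le_max_rpow_add_mul_rpow (ha : 0 ≤ a) (hb : 0 ≤ b) (hα0 : 0 ≤ α) (hα1 : α ≤ 1) :
    (a + b) ^ α ≤ max (a ^ α + α * b ^ α) (α * a ^ α + b ^ α) := by
  rcases le_total b a with hba | hab
  · exact le_max_of_le_left (add_rpow_le_rpow_add_mul_rpow hb hba hα0 hα1)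
  · rw [add_comm a b, add_comm (α * a ^ α)]
    exact le_max_of_le_right (add_rpow_le_rpow_add_mul_rpow ha hab hα0 hα1)

end RealPowers

theorem snowflake_satisfies_sra_general {Y : Type*} [PseudoMetricSpace Y] {α : ℝ}
    (hα0 : 0 ≤ α) (hα1 : α ≤ 1) (x y z : Y) :
    dist x y ^ α ≤
      max (dist x z ^ α + α * dist z y ^ α) (α * dist x z ^ α + dist z y ^ α) :=
  calc dist x y ^ α ≤ (dist x z + dist z y) ^ α :=
        Real.rpow_le_rpow dist_nonneg (dist_triangle x z y) hα0
    _ ≤ _ := add_rpow_le_max_rpow_add_mul_rpow dist_nonneg dist_nonneg hα0 hα1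

/-- For any metric space `(Y, d)` and `0 < α < 1`, the `α`-snowflake `(Y, d^α)`
satisfies the `SRA(α)` condition. -/
theorem snowflake_satisfies_sra
    {Y : Type*} [MetricSpace Y] (α : ℝ) (hα0 : 0 < α) (hα1 : α < 1) (x y z : Y) :
    dist x y ^ α ≤
      max (dist x z ^ α + α * dist z y ^ α) (α * dist x z ^ α + dist z y ^ α) :=
  snowflake_satisfies_sra_general hα0.le hα1.le x y z
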